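/- For every ε ∈ (0,1) and every M ≥ 1 there exists δ > 0 with the following property. Let A be a unital C*-algebra, B ⊆ A a C*-subalgebra, r₀ ∈ B with 0 ≤ r₀ ≤ 1, and x ∈ A with ‖x‖ ≤ M. Define continuous functions on [0,1]: f'(t) = 0 for t ≤ ε/3, f'(t) linear on [ε/3, 1−ε/3], f'(t) = 1 for t ≥ 1−ε/3; f₁(t) = 0 for t ≤ ε/6, f₁(t) linear on [ε/6, ε/3], f₁(t) = 1 for t ≥ ε/3 (so that f₁·f' = f'); and let h be the continuous function on [0,1] with h(0) = 0 and t·h(t) = f₁(t). If there exists b ∈ B with ‖b − r₀x‖ < δ and if ‖r₀x − xr₀‖ < δ, then the element y = h(r₀)·b + (1_A − f₁(r₀))^{1/2} · x · (1_A − f₁(r₀))^{1/2} satisfies: f'(r₀)·y ∈ B, y·f'(r₀) ∈ B, and ‖y − x‖ < ε. -/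

import Mathlib

open Filter Topology

/-- An element of a C*-algebra is positive if it is of the form `x* x`. -/
def IsPos {A : Type*} [Mul A] [Star A] (a : A) : Prop := ∃ x : A, a = star x * x

open Polynomial in
/-- Left multiplication by `q(r)` and the commutator with `q(r)` are bounded by constants which
depend on the polynomial `q` only, uniformly over all contractions `r`. -/
theorem exists_bound_commutator_aeval (q : ℝ[X]) :
    ∃ C D : ℝ, 0 ≤ C ∧ 0 ≤ D ∧ ∀ (A : Type*) [NormedRing A] [NormedAlgebra ℝ A] (r : A), ‖r‖ ≤ 1 →
      ∀ x : A, ‖aeval r q * x‖ ≤ D * ‖x‖ ∧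
        ‖aeval r q * x - x * aeval r q‖ ≤ C * ‖r * x - x * r‖ := by
  induction q using Polynomial.induction_on with
  | C a =>
    refine ⟨0, |a|, le_rfl, abs_nonneg a, fun A _ _ r _ x => ⟨?_, ?_⟩⟩
    · rw [aeval_C, ← Algebra.smul_def, norm_smul, Real.norm_eq_abs]
    · rw [aeval_C, Algebra.commutes, sub_self, norm_zero, zero_mul]
  | add p q hp hq =>
    obtain ⟨C₁, D₁, hC₁, hD₁, hp⟩ := hp
    obtain ⟨C₂, D₂, hC₂, hD₂, hq⟩ := hq
    refine ⟨C₁ + C₂, D₁ + D₂, by positivity, by positivity, fun A _ _ r hr x => ⟨?_, ?_⟩⟩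
    · rw [map_add, add_mul, add_mul]
      exact norm_add_le_of_le (hp A r hr x).1 (hq A r hr x).1
    · rw [map_add, add_mul, mul_add, add_sub_add_comm, add_mul]
      exact norm_add_le_of_le (hp A r hr x).2 (hq A r hr x).2
  | monomial n a ih =>
    obtain ⟨C₁, D₁, hC₁, hD₁, ih⟩ := ih
    refine ⟨D₁ + C₁, D₁, by positivity, hD₁, fun A _ _ r hr x => ?_⟩
    rw [pow_succ, ← mul_assoc, map_mul, aeval_X]
    set p := aeval r (Polynomial.C a * X ^ n)
    constructor
    · calc ‖p * r * x‖ = ‖p * (r * x)‖ := by rw [mul_assoc]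
        _ ≤ D₁ * ‖r * x‖ := (ih A r hr _).1
        _ ≤ D₁ * (1 * ‖x‖) := by gcongr; exact norm_mul_le_of_le hr le_rfl
        _ = D₁ * ‖x‖ := by rw [one_mul]
    · calc ‖p * r * x - x * (p * r)‖ = ‖p * (r * x - x * r) + (p * x - x * p) * r‖ := by
            congr 1; noncomm_ring
        _ ≤ D₁ * ‖r * x - x * r‖ + C₁ * ‖r * x - x * r‖ * 1 :=
            norm_add_le_of_le (ih A r hr _).1 (norm_mul_le_of_le (ih A r hr _).2 hr)
        _ = (D₁ + C₁) * ‖r * x - x * r‖ := by ring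

/-- If `f` is continuous on `[0, 1]`, then elements of norm at most `M` which almost commute with a
self-adjoint `r` of spectrum in `[0, 1]` almost commute with `f(r)`, uniformly in `r`. -/
theorem exists_bound_commutator_cfc {f : ℝ → ℝ} (hf : ContinuousOn f (Set.Icc 0 1)) {M η : ℝ}
    (hM : 0 < M) (hη : 0 < η) :
    ∃ C : ℝ, 0 ≤ C ∧ ∀ (A : Type*) [CStarAlgebra A] (r : A), IsSelfAdjoint r →
      spectrum ℝ r ⊆ Set.Icc 0 1 → ∀ x : A, ‖x‖ ≤ M →
        ‖cfc f r * x - x * cfc f r‖ ≤ η + C * ‖r * x - x * r‖ := by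
  obtain ⟨q, hq⟩ := exists_polynomial_near_of_continuousOn 0 1 f hf (η / (2 * M)) (by positivity)
  obtain ⟨C, D, hC, -, hCD⟩ := exists_bound_commutator_aeval q
  refine ⟨C, hC, fun A _ r hr hσ x hx => ?_⟩
  have hr1 : ‖r‖ ≤ 1 := by
    rw [← cfc_id ℝ r]
    refine norm_cfc_le zero_le_one fun t ht => ?_
    rw [id, Real.norm_of_nonneg (hσ ht).1]
    exact (hσ ht).2
  have hfr : ContinuousOn f (spectrum ℝ r) := hf.mono hσ
  have hd : ‖cfc f r - Polynomial.aeval r q‖ ≤ η / (2 * M) := by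
    rw [← cfc_polynomial q r, ← cfc_sub f q.eval r]
    refine norm_cfc_le (by positivity) fun t ht => ?_
    rw [Real.norm_eq_abs, abs_sub_comm]
    exact (hq t (hσ ht)).le
  set p := Polynomial.aeval r q
  calc ‖cfc f r * x - x * cfc f r‖
      = ‖(cfc f r - p) * x - x * (cfc f r - p) + (p * x - x * p)‖ := by congr 1; noncomm_ring
    _ ≤ η / (2 * M) * M + M * (η / (2 * M)) + C * ‖r * x - x * r‖ :=
        norm_add_le_of_le (norm_sub_le_of_le (norm_mul_le_of_le hd hx) (norm_mul_le_of_le hx hd))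
          (hCD A r hr1 x).2
    _ = η + C * ‖r * x - x * r‖ := by field_simp; ring

theorem IsPos.isSelfAdjoint {A : Type*} [Semigroup A] [StarMul A] {a : A} (ha : IsPos a) :
    IsSelfAdjoint a := by
  obtain ⟨x, rfl⟩ := ha
  exact IsSelfAdjoint.star_mul_self x

theorem IsPos.spectrum_subset_Icc {A : Type*} [CStarAlgebra A] {a : A} (ha : IsPos a)
    (ha' : IsPos (1 - a)) : spectrum ℝ a ⊆ Set.Icc 0 1 := by
  intro t ht
  constructor
  · obtain ⟨x, rfl⟩ := ha
    exact spectrum_star_mul_self_nonneg t ht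
  · obtain ⟨x, hx⟩ := ha'
    have h : 1 - t ∈ spectrum ℝ (1 - a) := by
      rw [← map_one (algebraMap ℝ A), ← spectrum.singleton_sub_eq]
      exact Set.sub_mem_sub rfl ht
    rw [hx] at h
    exact sub_nonneg.mp (spectrum_star_mul_self_nonneg _ h)

/-- A closed star subalgebra contains `f(a)` for each of its self-adjoint elements `a` and each
continuous `f` vanishing at zero. -/
theorem cfc_mem_of_map_zero {A : Type*} [CStarAlgebra A] {B : NonUnitalStarSubalgebra ℂ A}
    (hB : IsClosed (B : Set A)) {a : A} (ha : a ∈ B) {f : ℝ → ℝ} (hf : Continuous f)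
    (hf0 : f 0 = 0) : cfc f a ∈ B := by
  rw [← cfcₙ_eq_cfc (hf := hf.continuousOn) (hf0 := hf0)]
  exact cfcₙ_mem (𝕜' := ℂ) (hs := hB) f ha

/-- For every `ε ∈ (0,1)` and `M ≥ 1` there is `δ > 0` such that for
every unital C*-algebra `A`, every C*-subalgebra `B ⊆ A`, every positive contraction
`r₀ ∈ B` and every `x ∈ A` with `‖x‖ ≤ M`, if `b ∈ B` satisfies `‖b - r₀ x‖ < δ` and
`‖r₀ x - x r₀‖ < δ`, then, with the functions `f'` (equal to `0` on `[0, ε/3]`,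
linear on `[ε/3, 1 - ε/3]`, and `1` on `[1 - ε/3, 1]`), `f₁` (equal to `0` on
`[0, ε/6]`, linear on `[ε/6, ε/3]`, and `1` on `[ε/3, 1]`, so that `f₁ ⬝ f' = f'`)
and `h` (with `h 0 = 0` and `t * h t = f₁ t`), the element
`y = h(r₀) ⬝ b + (1 - f₁(r₀))^(1/2) ⬝ x ⬝ (1 - f₁(r₀))^(1/2)` satisfies
`f'(r₀) ⬝ y ∈ B`, `y ⬝ f'(r₀) ∈ B` and `‖y - x‖ < ε`. -/
theorem exists_delta_exact_compression :
    ∀ ε : ℝ, 0 < ε → ε < 1 → ∀ M : ℝ, 1 ≤ M → ∃ δ : ℝ, 0 < δ ∧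
      ∀ (A : Type) [CStarAlgebra A] (B : NonUnitalStarSubalgebra ℂ A),
        IsClosed (B : Set A) →
        ∀ r₀ ∈ B, IsPos r₀ → IsPos (1 - r₀) →
        ∀ x : A, ‖x‖ ≤ M →
        ∀ b ∈ B, ‖b - r₀ * x‖ < δ → ‖r₀ * x - x * r₀‖ < δ →
          let f' : ℝ → ℝ := fun t => max 0 (min 1 ((t - ε / 3) / (1 - 2 * ε / 3)))
          let f₁ : ℝ → ℝ := fun t => max 0 (min 1 ((t - ε / 6) / (ε / 6)))
          let h : ℝ → ℝ := fun t => f₁ t / t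
          let s : A := cfc (fun t : ℝ => Real.sqrt (1 - f₁ t)) r₀
          let y : A := cfc h r₀ * b + s * x * s
          cfc f' r₀ * y ∈ B ∧ y * cfc f' r₀ ∈ B ∧ ‖y - x‖ < ε := by
  intro ε hε hε1 M hM
  have hf₁c : Continuous fun t : ℝ => max 0 (min 1 ((t - ε / 6) / (ε / 6))) := by fun_prop
  obtain ⟨C, hC, hcomm⟩ := exists_bound_commutator_cfc
    (f := fun t => Real.sqrt (1 - max 0 (min 1 ((t - ε / 6) / (ε / 6)))))
    (by fun_prop) (zero_lt_one.trans_le hM) (show 0 < ε / 4 by positivity)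
  refine ⟨min (ε ^ 2 / 24) (ε / (4 * (C + 1))), by positivity, ?_⟩
  intro A _ B hB r hrB hr hr' x hx b hb hbδ hxδ f' f₁ h s y
  have hsa := hr.isSelfAdjoint
  have hσ := hr.spectrum_subset_Icc hr'
  have hf₁_nonneg (t : ℝ) : 0 ≤ f₁ t := le_max_left _ _
  have hf₁_le (t : ℝ) : f₁ t ≤ 1 := max_le zero_le_one (min_le_left _ _)
  have hf₁_zero (t : ℝ) (ht : t ≤ ε / 6) : f₁ t = 0 :=
    max_eq_left ((min_le_right _ _).trans
      (div_nonpos_of_nonpos_of_nonneg (sub_nonpos.mpr ht) (by positivity)))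
  have hf₁_one (t : ℝ) (ht : ε / 3 ≤ t) : f₁ t = 1 := by
    have : 1 ≤ (t - ε / 6) / (ε / 6) := by
      rw [le_div_iff₀ (by positivity)]
      linarith
    simp only [f₁, min_eq_left this, max_eq_right zero_le_one]
  have hf'_zero (t : ℝ) (ht : t ≤ ε / 3) : f' t = 0 :=
    max_eq_left ((min_le_right _ _).trans
      (div_nonpos_of_nonpos_of_nonneg (sub_nonpos.mpr ht) (by linarith)))
  have hh_eq : h = fun t => f₁ t / max t (ε / 6) := by
    ext t
    rcases le_total t (ε / 6) with ht | ht
    · simp only [h, hf₁_zero t ht, zero_div]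
    · simp only [h, max_eq_left ht]
  have hmax (t : ℝ) : 0 < max t (ε / 6) := lt_max_of_lt_right (by positivity)
  have hhc : Continuous h := by
    rw [hh_eq]
    exact hf₁c.div (by fun_prop) fun t => (hmax t).ne'
  have hf'c : Continuous f' := by fun_prop
  have hsc : Continuous fun t => Real.sqrt (1 - f₁ t) := by fun_prop
  have hh_norm : ‖cfc h r‖ ≤ 6 / ε := by
    refine norm_cfc_le (by positivity) fun t _ => ?_
    rw [hh_eq, Real.norm_of_nonneg (div_nonneg (hf₁_nonneg t) (hmax t).le)]
    calc f₁ t / max t (ε / 6) ≤ 1 / (ε / 6) := by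
          gcongr
          exacts [hf₁_le t, le_max_right _ _]
      _ = 6 / ε := by field_simp
  have hs_norm : ‖s‖ ≤ 1 := by
    refine norm_cfc_le zero_le_one fun t _ => ?_
    rw [Real.norm_of_nonneg (Real.sqrt_nonneg _), Real.sqrt_le_one]
    linarith [hf₁_nonneg t]
  have hf's (t : ℝ) : f' t * Real.sqrt (1 - f₁ t) = 0 := by
    rcases le_total t (ε / 3) with ht | ht
    · rw [hf'_zero t ht, zero_mul]
    · rw [hf₁_one t ht, sub_self, Real.sqrt_zero, mul_zero]
  have hf's_zero : cfc f' r * s = 0 := by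
    rw [← cfc_mul f' _ r hf'c.continuousOn hsc.continuousOn]
    simp only [hf's, cfc_const_zero]
  have hsf'_zero : s * cfc f' r = 0 := (cfc_commute_cfc _ _ r).eq.trans hf's_zero
  have hf'B : cfc f' r ∈ B :=
    cfc_mem_of_map_zero hB hrB hf'c (hf'_zero 0 (by positivity))
  have hhB : cfc h r ∈ B := cfc_mem_of_map_zero hB hrB hhc (div_zero _)
  have hhr : cfc h r * r + s * s = 1 := by
    have hid : cfc h r * r = cfc (fun t => h t * t) r := by
      rw [cfc_mul h (fun t => t) r hhc.continuousOn, cfc_id' ℝ r]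
    rw [hid, ← cfc_mul _ _ r hsc.continuousOn hsc.continuousOn,
      ← cfc_add r _ _ (by fun_prop) (by fun_prop), ← cfc_one ℝ r]
    refine cfc_congr fun t _ => ?_
    have hht : h t * t = f₁ t := by
      rcases eq_or_ne t 0 with rfl | ht
      · rw [mul_zero, hf₁_zero 0 (by positivity)]
      · exact div_mul_cancel₀ _ ht
    simp only [hht, Real.mul_self_sqrt (sub_nonneg.mpr (hf₁_le t)), add_sub_cancel, Pi.one_apply]
  refine ⟨?_, ?_, ?_⟩
  · have : cfc f' r * y = cfc f' r * (cfc h r * b) := by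
      simp only [y, mul_add, ← mul_assoc, hf's_zero, zero_mul, add_zero]
    rw [this]
    exact mul_mem hf'B (mul_mem hhB hb)
  · have : y * cfc f' r = cfc h r * b * cfc f' r := by
      simp only [y, add_mul, mul_assoc, hsf'_zero, mul_zero, add_zero]
    rw [this]
    exact mul_mem (mul_mem hhB hb) hf'B
  · have hyx : y - x = cfc h r * (b - r * x) - s * (s * x - x * s) := by
      calc y - x = y - (cfc h r * r + s * s) * x := by rw [hhr, one_mul]
        _ = _ := by simp only [y]; noncomm_ring
    have hC4 : C * ‖r * x - x * r‖ ≤ ε / 4 := by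
      calc C * ‖r * x - x * r‖ ≤ (C + 1) * (ε / (4 * (C + 1))) := by
            gcongr
            · linarith
            · exact hxδ.le.trans (min_le_right _ _)
        _ = ε / 4 := by field_simp
    calc ‖y - x‖ ≤ 6 / ε * (ε ^ 2 / 24) + 1 * (ε / 4 + C * ‖r * x - x * r‖) := by
          rw [hyx]
          exact norm_sub_le_of_le
            (norm_mul_le_of_le hh_norm (hbδ.le.trans (min_le_left _ _)))
            (norm_mul_le_of_le hs_norm (hcomm A r hsa hσ x hx))
      _ ≤ ε / 4 + 1 * (ε / 4 + ε / 4) := by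
          gcongr
          exact le_of_eq (by field_simp; norm_num)
      _ < ε := by linarith
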